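/- Fix n ≥ 2, t ∈ ℝ, and a function d ↦ r₀(d) > 0 with lim_{d→∞} (r₀(d)² − d/12)/√d = t. Let H_d denote the Shannon entropy (base 2) of the hard random geometric graph ensemble on n i.i.d. uniform points in the d-dimensional torus 𝕋^d with connection radius r₀(d). Then lim_{d→∞} H_d = (n(n−1)/2)·h₂(p̄(t)), where p̄(t) = P(W ≤ t) for W a centered Gaussian of variance 1/180 and h₂(p) = −p log₂ p − (1−p) log₂(1−p). Moreover, as a function of t this limit is maximised exactly at t = 0, where p̄(0) = 1/2 and the limit equals n(n−1)/2. -/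

import Mathlib

open MeasureTheory ProbabilityTheory Filter Topology

/-- The uniform probability measure on `[0,1]`. -/
noncomputable def unif01 : Measure ℝ := volume.restrict (Set.Icc (0:ℝ) 1)

/-- The law of `n` i.i.d. uniform random points in `[0,1]^d`. -/
noncomputable def cubeLaw (n d : ℕ) : Measure (Fin n → Fin d → ℝ) :=
  Measure.pi fun _ => Measure.pi fun _ => unif01

/-- The distance on the `d`-dimensional unit torus. -/
noncomputable def torusDist (d : ℕ) (x y : Fin d → ℝ) : ℝ :=
  Real.sqrt (∑ k : Fin d, (min |x k - y k| (1 - |x k - y k|)) ^ 2)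

/-- `p̄(t) = P(W ≤ t)` for `W` a centered Gaussian of variance `1/180`. -/
noncomputable def pbar (t : ℝ) : ℝ :=
  (gaussianReal 0 (1/180 : NNReal) (Set.Iic t)).toReal

/-- The binary entropy function (base-2 logarithm). -/
noncomputable def binEnt (p : ℝ) : ℝ := -p * Real.logb 2 p - (1 - p) * Real.logb 2 (1 - p)

/-- The probability that the hard torus RGG equals the labelled graph `g`. -/
noncomputable def rggProb (n d : ℕ) (r : ℝ) (g : SimpleGraph (Fin n)) : ℝ :=
  (cubeLaw n d {ω | ∀ i j : Fin n, i < j →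
    (torusDist d (ω i) (ω j) ≤ r ↔ g.Adj i j)}).toReal

/-- The Shannon entropy (base 2) of the hard torus RGG ensemble in dimension `d`. -/
noncomputable def rggEntropy (n d : ℕ) (r : ℝ) : ℝ :=
  -∑ g : SimpleGraph (Fin n), rggProb n d r g * Real.logb 2 (rggProb n d r g)

/-!
The squared torus distance of two points is a sum of `d` i.i.d. squared circle distances, one per
coordinate. The edges of the graph are dependent, since they share vertices; but the centred squared
circle distance `circleKernel` integrates to zero over either argument with the other held fixed, so
within one coordinate the contributions to distinct edges are pairwise uncorrelated, each of
variance `1 / 180`. By the multivariate central limit theorem over the coordinates, the rescaled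
squared distances converge jointly to *independent* centred Gaussians of variance `1 / 180`. Hence
the law of the random geometric graph converges to the Erdős–Rényi law with edge probability
`pbar t`, and its entropy converges too, being a continuous function of finitely many
probabilities. Finally `pbar` is strictly increasing with `pbar 0 = 1 / 2`, the unique maximiser of
the binary entropy.
-/

section ProductMeasure

variable {ι : Type*} [Fintype ι] {X : ι → Type*} [∀ i, MeasurableSpace (X i)]
  (μ : ∀ i, Measure (X i)) [∀ i, IsProbabilityMeasure (μ i)]

lemma measurePreserving_update [DecidableEq ι] (a : ι) :
    MeasurePreserving (fun p : (∀ i, X i) × X a => Function.update p.1 a p.2)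
      ((Measure.pi μ).prod (μ a)) (Measure.pi μ) := by
  have hmeas : Measurable fun p : (∀ i, X i) × X a => Function.update p.1 a p.2 :=
    measurable_pi_iff.2 fun i => by
      by_cases h : i = a
      · subst h; simpa using measurable_snd
      · simp only [Function.update_of_ne h]; fun_prop
  refine ⟨hmeas, (Measure.pi_eq fun s hs => ?_).symm⟩
  have hpre : (fun p : (∀ i, X i) × X a => Function.update p.1 a p.2) ⁻¹' Set.univ.pi s =
      Set.univ.pi (Function.update s a Set.univ) ×ˢ s a := by
    ext p
    simp only [Set.mem_preimage, Set.mem_univ_pi, Set.mem_prod,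
      Function.forall_update_iff p.1 fun i y => y ∈ s i,
      Function.forall_update_iff s fun i t => p.1 i ∈ t, Set.mem_univ, true_and]
    exact and_comm
  have hupdate : (fun i => μ i (Function.update s a Set.univ i)) =
      Function.update (fun i => μ i (s i)) a 1 := by
    simpa using funext fun i => Function.apply_update (fun i => μ i) s a Set.univ i
  rw [Measure.map_apply hmeas (.univ_pi hs), hpre, Measure.prod_prod, Measure.pi_pi, hupdate,
    Finset.prod_update_of_mem (Finset.mem_univ a), one_mul, Finset.sdiff_singleton_eq_erase,
    Finset.prod_erase_mul _ _ (Finset.mem_univ a)]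

lemma integral_pi_eq_integral_integral_update [DecidableEq ι] {E : Type*} [NormedAddCommGroup E]
    [NormedSpace ℝ E] (a : ι) {f : (∀ i, X i) → E} (hf : Integrable f (Measure.pi μ)) :
    ∫ x, f x ∂Measure.pi μ = ∫ x, ∫ u, f (Function.update x a u) ∂μ a ∂Measure.pi μ := by
  have hupdate := measurePreserving_update μ a
  have hmap : ∫ x, f x ∂Measure.pi μ =
      ∫ p, f (Function.update p.1 a p.2) ∂(Measure.pi μ).prod (μ a) := by
    rw [← integral_map hupdate.aemeasurable (by rw [hupdate.map_eq]; exact hf.1), hupdate.map_eq]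
  exact hmap.trans (integral_prod _ (hupdate.integrable_comp_of_integrable hf))

lemma measurePreserving_eval_prodMk {i j : ι} (hij : i ≠ j) :
    MeasurePreserving (fun x : ∀ i, X i => (x i, x j)) (Measure.pi μ) ((μ i).prod (μ j)) := by
  refine ⟨by fun_prop, ?_⟩
  have hindep := (iIndepFun_pi (μ := μ) (X := fun _ x => x) fun _ => aemeasurable_id).indepFun hij
  rw [hindep.map_prod_eq_prod_map_map (measurable_pi_apply i).aemeasurable
    (measurable_pi_apply j).aemeasurable, (measurePreserving_eval μ i).map_eq,
    (measurePreserving_eval μ j).map_eq]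

lemma measure_pi_frontier_univ_pi_eq_zero [∀ i, TopologicalSpace (X i)] {s : ∀ i, Set (X i)}
    (hs : ∀ i, μ i (frontier (s i)) = 0) : Measure.pi μ (frontier (Set.univ.pi s)) = 0 := by
  have hsub : frontier (Set.univ.pi s) ⊆ ⋃ i, Function.eval i ⁻¹' frontier (s i) := by
    simp only [frontier, closure_pi_set, interior_pi_set Set.finite_univ]
    intro x ⟨hclosure, hinterior⟩
    simp only [Set.mem_univ_pi, not_forall] at hinterior
    obtain ⟨i, hi⟩ := hinterior
    exact Set.mem_iUnion.2 ⟨i, hclosure i trivial, hi⟩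
  refine measure_mono_null hsub (measure_iUnion_null fun i => ?_)
  exact (measurePreserving_eval μ i).quasiMeasurePreserving.preimage_null (hs i)

end ProductMeasure

lemma measurePreserving_infinitePi_swap {ι X : Type*} [Fintype ι] [MeasurableSpace X]
    (μ : Measure X) [IsProbabilityMeasure μ] (d : ℕ) :
    MeasurePreserving (fun (ω : ℕ → ι → X) (i : ι) (k : Fin d) => ω k i)
      (Measure.infinitePi fun _ => Measure.pi fun _ => μ)
      (Measure.pi fun _ => Measure.pi fun _ => μ) := by
  refine ⟨by fun_prop, ?_⟩
  simp only [← Measure.infinitePi_eq_pi]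
  have hindep : iIndepFun (fun (p : ι × Fin d) (ω : ℕ → ι → X) => ω p.2 p.1)
      (Measure.infinitePi fun _ => Measure.infinitePi fun _ => μ) :=
    (iIndepFun_uncurry_infinitePi' (fun (_ : ℕ) (_ : ι) => μ) (X := fun _ _ x => x)
      fun _ _ => measurable_id).precomp (g := fun p : ι × Fin d => ((p.2 : ℕ), p.1))
      fun p q h => by simpa [Prod.ext_iff, Fin.ext_iff, and_comm] using h
  have heval (p : ι × Fin d) :
      (Measure.infinitePi fun _ : ℕ => Measure.infinitePi fun _ : ι => μ).map
        (fun ω => ω p.2 p.1) = μ :=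
    ((measurePreserving_eval_infinitePi (fun _ : ι => μ) p.1).comp
      (measurePreserving_eval_infinitePi (fun _ => Measure.infinitePi fun _ : ι => μ)
        (p.2 : ℕ))).map_eq
  have hmap := (iIndepFun_iff_map_fun_eq_infinitePi_map (by fun_prop)).1 hindep
  simp only [heval] at hmap
  have hcurry := Measure.infinitePi_map_curry fun (_ : ι) (_ : Fin d) => μ
  rw [← hmap, Measure.map_map (MeasurableEquiv.measurable _) (by fun_prop)] at hcurry
  exact hcurry

section Entropy

lemma negMulLog_prod {ι : Type*} [DecidableEq ι] (s : Finset ι) (x : ι → ℝ) :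
    Real.negMulLog (∏ i ∈ s, x i) = ∑ i ∈ s, Real.negMulLog (x i) * ∏ j ∈ s.erase i, x j := by
  induction s using Finset.induction_on with
  | empty => simp
  | insert a s ha ih =>
    rw [Finset.prod_insert ha, Real.negMulLog_mul, ih, Finset.sum_insert ha,
      Finset.erase_insert ha, Finset.mul_sum, mul_comm]
    congr 1
    refine Finset.sum_congr rfl fun i hi => ?_
    have hai : a ≠ i := fun h => ha (h ▸ hi)
    rw [Finset.erase_insert_of_ne hai, Finset.prod_insert (by simp [ha])]
    ring

lemma sum_negMulLog_prod {ι : Type*} [Fintype ι] [DecidableEq ι] {κ : ι → Type*}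
    [∀ i, Fintype (κ i)] (p : ∀ i, κ i → ℝ) (hp : ∀ i, ∑ a, p i a = 1) :
    ∑ f : ∀ i, κ i, Real.negMulLog (∏ i, p i (f i)) = ∑ i, ∑ a, Real.negMulLog (p i a) := by
  simp only [negMulLog_prod]
  rw [Finset.sum_comm]
  refine Finset.sum_congr rfl fun i _ => ?_
  let q : ∀ j, κ j → ℝ := Function.update p i fun a => Real.negMulLog (p i a)
  have hq (f : ∀ j, κ j) :
      Real.negMulLog (p i (f i)) * ∏ j ∈ Finset.univ.erase i, p j (f j) = ∏ j, q j (f j) := by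
    rw [← Finset.mul_prod_erase _ _ (Finset.mem_univ i)]
    simp only [q, Function.update_self]
    congr 1
    refine Finset.prod_congr rfl fun j hj => ?_
    rw [Function.update_of_ne (Finset.ne_of_mem_erase hj)]
  simp only [hq, ← Fintype.prod_sum]
  rw [Finset.prod_eq_single i (fun j _ hj => by simp [q, hj, hp]) (by simp)]
  simp [q]

end Entropy

section Graph

variable (V : Type*) [LinearOrder V]

/-- The possible edges of a graph on a linearly ordered vertex set, each listed once, with its
smaller endpoint first. -/
abbrev OrderedEdge := {e : V × V // e.1 < e.2}

open Classical in
/-- Labelled graphs as indicator functions of their edge sets. -/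
noncomputable def graphEquivEdgeIndicator : SimpleGraph V ≃ (OrderedEdge V → Bool) where
  toFun g e := decide (g.Adj e.1.1 e.1.2)
  invFun f := SimpleGraph.fromRel fun a b => ∃ h : a < b, f ⟨(a, b), h⟩
  left_inv g := by
    ext a b
    rcases lt_trichotomy a b with h | rfl | h
    · simp [h, h.ne, h.not_gt]
    · simp
    · simp [h, h.ne', h.not_gt, g.adj_comm]
  right_inv f := by
    funext ⟨e, h⟩
    simp [h, h.ne, h.not_gt]

variable {V} in
lemma exists_endpoint_notMem_of_ne {e e' : OrderedEdge V} (hne : e ≠ e') :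
    ∃ a, (a = e.1.1 ∨ a = e.1.2) ∧ e'.1.1 ≠ a ∧ e'.1.2 ≠ a := by
  obtain ⟨⟨i, j⟩, hij⟩ := e
  obtain ⟨⟨k, l⟩, hkl⟩ := e'
  by_contra! hall
  have hi : k = i ∨ l = i := or_iff_not_imp_left.2 (hall i (.inl rfl))
  have hj : k = j ∨ l = j := or_iff_not_imp_left.2 (hall j (.inr rfl))
  rcases hi with rfl | rfl <;> rcases hj with rfl | rfl
  exacts [hij.ne rfl, hne rfl, hij.not_gt hkl, hij.ne rfl]

lemma card_orderedEdge_fin (n : ℕ) :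
    (Fintype.card (OrderedEdge (Fin n)) : ℝ) = (n * (n - 1) : ℝ) / 2 := by
  have hcard : Fintype.card (OrderedEdge (Fin n)) = n.choose 2 := by
    rw [Fintype.card_subtype, Finset.card_filter, Fintype.sum_prod_type_right]
    simp [Finset.filter_gt_eq_Iio, Fin.sum_univ_eq_sum_range fun i => i, Finset.sum_range_id,
      Nat.choose_two_right]
  rw [hcard, Nat.cast_choose_two]

end Graph

section Gaussian

lemma strictMono_measureReal_Iic {μ : Measure ℝ} [IsFiniteMeasure μ] [μ.IsOpenPosMeasure] :
    StrictMono fun t => μ.real (Set.Iic t) := by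
  intro s t hst
  have hIoc : 0 < μ.real (Set.Ioc s t) := ENNReal.toReal_pos
    ((isOpen_Ioo.measure_pos μ (Set.nonempty_Ioo.2 hst)).trans_le
      (measure_mono Set.Ioo_subset_Ioc_self)).ne' (measure_ne_top _ _)
  have hunion := measureReal_union (μ := μ) (Set.Iic_disjoint_Ioc (le_refl s))
    (measurableSet_Ioc (b := t))
  rw [Set.Iic_union_Ioc_eq_Iic hst.le] at hunion
  simp only [hunion]
  linarith

lemma measureReal_Iic_zero {μ : Measure ℝ} [IsProbabilityMeasure μ] [μ.IsNegInvariant]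
    [NullSingletonClass μ] : μ.real (Set.Iic 0) = 1 / 2 := by
  have hneg : μ.real (Set.Ici 0) = μ.real (Set.Iic 0) := by
    simpa [Measure.real] using congrArg ENNReal.toReal (μ.measure_preimage_neg (Set.Iic (0 : ℝ)))
  have hcompl := probReal_compl_eq_one_sub (μ := μ) (measurableSet_Iic (a := (0 : ℝ)))
  rw [Set.compl_Iic, measureReal_congr Ioi_ae_eq_Ici, hneg] at hcompl
  linarith

lemma isNegInvariant_gaussianReal_zero (v : NNReal) : (gaussianReal 0 v).IsNegInvariant :=
  ⟨by rw [Measure.neg, gaussianReal_map_neg, neg_zero]⟩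

end Gaussian

section DegenerateKernel

/-- A square-integrable kernel that averages to zero in each of its two arguments when the other
one is held fixed (a completely degenerate kernel in the language of `U`-statistics). -/
structure IsDegenerateKernel {X : Type*} [MeasurableSpace X] (μ : Measure X) (h : X → X → ℝ) :
    Prop where
  measurable : Measurable (Function.uncurry h)
  memLp : MemLp (Function.uncurry h) 2 (μ.prod μ)
  integral_left (y : X) : ∫ x, h x y ∂μ = 0
  integral_right (x : X) : ∫ y, h x y ∂μ = 0

/-- The value of the kernel `h` on the pair of points that `x` assigns to the endpoints of `e`. -/
def edgeKernel {V X : Type*} [LinearOrder V] (h : X → X → ℝ) (e : OrderedEdge V) (x : V → X) : ℝ :=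
  h (x e.1.1) (x e.1.2)

namespace IsDegenerateKernel

variable {V X : Type*} [LinearOrder V] [MeasurableSpace X] {μ : Measure X} {h : X → X → ℝ}

lemma integral_edgeKernel_update (hh : IsDegenerateKernel μ h) {e : OrderedEdge V} {a : V}
    (ha : a = e.1.1 ∨ a = e.1.2) (x : V → X) :
    ∫ u, edgeKernel h e (Function.update x a u) ∂μ = 0 := by
  rcases ha with rfl | rfl
  · simpa [edgeKernel, e.2.ne'] using hh.integral_left (x e.1.2)
  · simpa [edgeKernel, e.2.ne] using hh.integral_right (x e.1.1)

lemma measurable_edgeKernel (hh : IsDegenerateKernel μ h) (e : OrderedEdge V) :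
    Measurable (edgeKernel h e : (V → X) → ℝ) :=
  hh.measurable.comp (by fun_prop : Measurable fun x : V → X => (x e.1.1, x e.1.2))

variable [Fintype V] [IsProbabilityMeasure μ]

lemma memLp_edgeKernel (hh : IsDegenerateKernel μ h) (e : OrderedEdge V) :
    MemLp (edgeKernel h e) 2 (Measure.pi fun _ => μ) :=
  hh.memLp.comp_measurePreserving (measurePreserving_eval_prodMk (fun _ => μ) e.2.ne)

lemma integral_edgeKernel (hh : IsDegenerateKernel μ h) (e : OrderedEdge V) :
    ∫ x, edgeKernel h e x ∂Measure.pi (fun _ => μ) = 0 := by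
  rw [integral_pi_eq_integral_integral_update (fun _ => μ) e.1.1
    ((hh.memLp_edgeKernel e).integrable one_le_two)]
  simp [hh.integral_edgeKernel_update]

lemma integral_edgeKernel_mul_self (hh : IsDegenerateKernel μ h) (e : OrderedEdge V) :
    ∫ x, edgeKernel h e x * edgeKernel h e x ∂Measure.pi (fun _ => μ) =
      ∫ p, h p.1 p.2 ^ 2 ∂μ.prod μ := by
  have hpair := measurePreserving_eval_prodMk (fun _ : V => μ) e.2.ne
  rw [← hpair.map_eq, integral_map hpair.aemeasurable]
  · simp only [edgeKernel, pow_two]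
  · rw [hpair.map_eq]
    exact hh.memLp.1.pow 2

lemma integral_edgeKernel_mul_edgeKernel (hh : IsDegenerateKernel μ h) {e e' : OrderedEdge V}
    (hne : e ≠ e') :
    ∫ x, edgeKernel h e x * edgeKernel h e' x ∂Measure.pi (fun _ => μ) = 0 := by
  -- Averaging over an endpoint of the first edge that the second misses kills the first factor.
  obtain ⟨a, ha, hleft, hright⟩ := exists_endpoint_notMem_of_ne hne
  have hconst (x : V → X) (u : X) :
      edgeKernel h e' (Function.update x a u) = edgeKernel h e' x := by
    simp only [edgeKernel, Function.update_of_ne hleft, Function.update_of_ne hright]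
  have hintegrable : Integrable (fun x => edgeKernel h e x * edgeKernel h e' x)
      (Measure.pi fun _ => μ) := (hh.memLp_edgeKernel e).integrable_mul (hh.memLp_edgeKernel e')
  rw [integral_pi_eq_integral_integral_update (fun _ => μ) a hintegrable]
  simp only [hconst, integral_mul_const, hh.integral_edgeKernel_update ha, zero_mul, integral_zero]

lemma covariance_edgeKernel (hh : IsDegenerateKernel μ h) {e e' : OrderedEdge V} (hne : e ≠ e') :
    cov[edgeKernel h e, edgeKernel h e'; Measure.pi fun _ => μ] = 0 := by
  simp only [covariance, hh.integral_edgeKernel, sub_zero]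
  exact hh.integral_edgeKernel_mul_edgeKernel hne

lemma variance_edgeKernel (hh : IsDegenerateKernel μ h) (e : OrderedEdge V) :
    Var[edgeKernel h e; Measure.pi fun _ => μ] = ∫ p, h p.1 p.2 ^ 2 ∂μ.prod μ := by
  rw [← covariance_self (hh.memLp_edgeKernel e).1.aemeasurable]
  simp only [covariance, hh.integral_edgeKernel, sub_zero]
  exact hh.integral_edgeKernel_mul_self e

end IsDegenerateKernel

end DegenerateKernel

section CircleKernel

instance isProbabilityMeasure_unif01 : IsProbabilityMeasure unif01 :=
  ⟨by simp [unif01]⟩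

/-- The centred squared distance on the circle `ℝ / ℤ`; the mean squared distance of two
independent uniform points is `1 / 12`. -/
noncomputable def circleKernel (x y : ℝ) : ℝ := ‖((x - y : ℝ) : UnitAddCircle)‖ ^ 2 - 1 / 12

lemma norm_coe_sub_eq_min {x y : ℝ} (hx : x ∈ Set.Icc (0 : ℝ) 1) (hy : y ∈ Set.Icc (0 : ℝ) 1) :
    ‖((x - y : ℝ) : UnitAddCircle)‖ = min |x - y| (1 - |x - y|) := by
  have habs : ‖((x - y : ℝ) : UnitAddCircle)‖ = ‖((|x - y| : ℝ) : UnitAddCircle)‖ := by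
    rcases abs_choice (x - y) with h | h <;> rw [h]
    rw [AddCircle.coe_neg, norm_neg]
  rw [habs, UnitAddCircle.norm_eq, abs_sub_round_eq_min]
  have hle : |x - y| ≤ 1 := abs_sub_le_of_le_of_le hx.1 hx.2 hy.1 hy.2 |>.trans (by norm_num)
  rcases hle.eq_or_lt with heq | hlt
  · simp [heq]
  · rw [Int.fract_eq_self.2 ⟨abs_nonneg _, hlt⟩]

lemma integral_unif01_comp_norm_coe_sub (F : ℝ → ℝ) (y : ℝ) :
    ∫ x, F ‖((x - y : ℝ) : UnitAddCircle)‖ ∂unif01 = ∫ x in (-(1 / 2))..(1 / 2), F |x| := by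
  have hperiodic : Function.Periodic (fun x : ℝ => F ‖(x : UnitAddCircle)‖) 1 := fun x => by
    simp
  have hshift := hperiodic.intervalIntegral_add_eq (0 - y) (-(1 / 2))
  rw [unif01, integral_Icc_eq_integral_Ioc, ← intervalIntegral.integral_of_le zero_le_one,
    intervalIntegral.integral_comp_sub_right fun x : ℝ => F ‖(x : UnitAddCircle)‖,
    show (1 : ℝ) - y = 0 - y + 1 by ring, hshift, show -(1 / 2) + 1 = (1 / 2 : ℝ) by norm_num]
  refine intervalIntegral.integral_congr fun x hx => ?_
  have hx' : |x| ≤ 1 / 2 := by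
    rwa [Set.uIcc_of_le (by norm_num), Set.mem_Icc, ← abs_le] at hx
  simp only [(AddCircle.norm_coe_eq_abs_iff 1 one_ne_zero).2 (by simpa using hx')]

lemma circleKernel_comm (x y : ℝ) : circleKernel x y = circleKernel y x := by
  simp only [circleKernel, AddCircle.coe_sub, norm_sub_rev]

lemma integral_circleKernel (y : ℝ) : ∫ x, circleKernel x y ∂unif01 = 0 := by
  simp only [circleKernel]
  rw [integral_unif01_comp_norm_coe_sub (fun u => u ^ 2 - 1 / 12)]
  simp only [sq_abs]
  rw [intervalIntegral.integral_sub (by simp) (by simp), integral_pow]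
  norm_num

lemma integral_circleKernel_sq (y : ℝ) : ∫ x, circleKernel x y ^ 2 ∂unif01 = 1 / 180 := by
  simp only [circleKernel]
  rw [integral_unif01_comp_norm_coe_sub (fun u => (u ^ 2 - 1 / 12) ^ 2)]
  have hexpand (x : ℝ) : (|x| ^ 2 - 1 / 12) ^ 2 = x ^ 4 - 1 / 6 * x ^ 2 + 1 / 144 := by
    rw [sq_abs]; ring
  simp only [hexpand]
  rw [intervalIntegral.integral_add (by apply Continuous.intervalIntegrable; fun_prop) (by simp),
    intervalIntegral.integral_sub (by simp) (by apply Continuous.intervalIntegrable; fun_prop),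
    intervalIntegral.integral_const_mul, integral_pow, integral_pow]
  norm_num

lemma continuous_uncurry_circleKernel : Continuous (Function.uncurry circleKernel) := by
  have hcoe : Continuous fun x : ℝ => (x : UnitAddCircle) := AddCircle.continuous_mk' 1
  have hsub : Continuous fun p : ℝ × ℝ => ((p.1 - p.2 : ℝ) : UnitAddCircle) :=
    hcoe.comp (by fun_prop)
  exact (hsub.norm.pow 2).sub continuous_const

lemma abs_circleKernel_le (x y : ℝ) : |circleKernel x y| ≤ 1 := by
  have hle : ‖((x - y : ℝ) : UnitAddCircle)‖ ≤ 1 / 2 := by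
    simpa using AddCircle.norm_le_half_period (x := ((x - y : ℝ) : UnitAddCircle)) 1 one_ne_zero
  rw [circleKernel, abs_le]
  constructor <;> nlinarith [norm_nonneg ((x - y : ℝ) : UnitAddCircle)]

lemma isDegenerateKernel_circleKernel : IsDegenerateKernel unif01 circleKernel where
  measurable := continuous_uncurry_circleKernel.measurable
  memLp := .of_bound continuous_uncurry_circleKernel.aestronglyMeasurable 1
    (ae_of_all _ fun p => abs_circleKernel_le p.1 p.2)
  integral_left := integral_circleKernel
  integral_right x := by simpa only [circleKernel_comm x] using integral_circleKernel x

lemma integral_prod_circleKernel_sq :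
    ∫ p, circleKernel p.1 p.2 ^ 2 ∂unif01.prod unif01 = 1 / 180 := by
  rw [integral_prod_symm (fun p : ℝ × ℝ => circleKernel p.1 p.2 ^ 2)
    isDegenerateKernel_circleKernel.memLp.integrable_sq]
  simp [integral_circleKernel_sq]

end CircleKernel

section CentralLimit

variable {Ω Ω' ι : Type*} [Fintype ι] {mΩ : MeasurableSpace Ω} {mΩ' : MeasurableSpace Ω'}
  {P : Measure Ω} {Q : Measure Ω'}

lemma charFun_map_toLp_eq_charFun_map_sum_mul {Y : Ω → ι → ℝ} (hY : AEMeasurable Y P)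
    (θ : EuclideanSpace ℝ ι) :
    charFun (P.map fun ω => WithLp.toLp 2 (Y ω)) θ =
      charFun (P.map fun ω => ∑ i, θ i * Y ω i) 1 := by
  have htoLp : AEMeasurable (fun ω => WithLp.toLp 2 (Y ω)) P :=
    (MeasurableEquiv.toLp 2 (ι → ℝ)).measurable.comp_aemeasurable hY
  have hsum : AEMeasurable (fun ω => ∑ i, θ i * Y ω i) P :=
    (show Measurable fun x : ι → ℝ => ∑ i, θ i * x i by fun_prop).comp_aemeasurable hY
  rw [charFun_apply, charFun_apply, integral_map htoLp (by fun_prop),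
    integral_map hsum (by fun_prop)]
  simp [PiLp.inner_apply]

lemma sum_mul_inv_sqrt_mul_sum_sub {X : ℕ → Ω → ι → ℝ}
    (hX : ∀ i, Integrable (fun ω => X 0 ω i) P) (θ : ι → ℝ) (n : ℕ) (ω : Ω) :
    ∑ i, θ i * ((√n)⁻¹ * (∑ k ∈ Finset.range n, X k ω i - n * ∫ ω, X 0 ω i ∂P)) =
      (√n)⁻¹ * (∑ k ∈ Finset.range n, ∑ i, θ i * X k ω i -
        n * ∫ ω, ∑ i, θ i * X 0 ω i ∂P) := by
  rw [integral_finsetSum _ fun i _ => (hX i).const_mul (θ i), Finset.sum_comm, Finset.mul_sum,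
    ← Finset.sum_sub_distrib, Finset.mul_sum]
  refine Finset.sum_congr rfl fun i _ => ?_
  rw [integral_const_mul, ← Finset.mul_sum]
  ring

variable [IsProbabilityMeasure P] [IsProbabilityMeasure Q]

/-- The Cramér–Wold device. -/
lemma tendstoInDistribution_of_forall_sum_mul {Y : ℕ → Ω → ι → ℝ} {Z : Ω' → ι → ℝ}
    (hY : ∀ n, AEMeasurable (Y n) P) (hZ : AEMeasurable Z Q)
    (h : ∀ θ : ι → ℝ, TendstoInDistribution (fun n ω => ∑ i, θ i * Y n ω i) atTop
      (fun ω => ∑ i, θ i * Z ω i) (fun _ => P) Q) :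
    TendstoInDistribution Y atTop Z (fun _ => P) Q := by
  have htoLp : Measurable (WithLp.toLp 2 : (ι → ℝ) → EuclideanSpace ℝ ι) :=
    (MeasurableEquiv.toLp 2 (ι → ℝ)).measurable
  have hEuclidean : TendstoInDistribution (fun n ω => WithLp.toLp 2 (Y n ω)) atTop
      (fun ω => WithLp.toLp 2 (Z ω)) (fun _ => P) Q :=
    ⟨fun n => htoLp.comp_aemeasurable (hY n), htoLp.comp_aemeasurable hZ,
      ProbabilityMeasure.tendsto_iff_tendsto_charFun.2 fun θ => by
        have hθ := ProbabilityMeasure.tendsto_iff_tendsto_charFun.1 (h θ).tendsto 1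
        simpa only [ProbabilityMeasure.coe_mk, charFun_map_toLp_eq_charFun_map_sum_mul (hY _),
          charFun_map_toLp_eq_charFun_map_sum_mul hZ] using hθ⟩
  exact hEuclidean.continuous_comp (PiLp.continuous_ofLp 2 fun _ : ι => ℝ)

lemma hasLaw_sum_mul_pi_gaussianReal (v : ι → NNReal) (θ : ι → ℝ) :
    HasLaw (fun x : ι → ℝ => ∑ i, θ i * x i) (gaussianReal 0 (∑ i, θ i ^ 2 * v i).toNNReal)
      (Measure.pi fun i => gaussianReal 0 (v i)) := by
  have hmeas : Measurable fun x : ι → ℝ => ∑ i, θ i * x i := by fun_prop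
  refine ⟨hmeas.aemeasurable, Measure.ext_of_charFun (funext fun s => ?_)⟩
  have hindep : iIndepFun (fun i (x : ι → ℝ) => θ i * x i)
      (Measure.pi fun i => gaussianReal 0 (v i)) :=
    iIndepFun_pi (X := fun i x => θ i * x) fun i => by fun_prop
  have hcoord (i : ι) : HasLaw (fun x : ι → ℝ => θ i * x i)
      (gaussianReal (θ i * 0) (.mk (θ i ^ 2) (sq_nonneg _) * v i))
      (Measure.pi fun i => gaussianReal 0 (v i)) :=
    gaussianReal_const_mul (measurePreserving_eval (fun i => gaussianReal 0 (v i)) i).hasLaw (θ i)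
  have hnonneg : 0 ≤ ∑ i, θ i ^ 2 * (v i : ℝ) := by positivity
  rw [hindep.charFun_map_fun_sum_eq_prod fun i => (hcoord i).aemeasurable]
  simp only [Finset.prod_apply, (hcoord _).map_eq, charFun_gaussianReal, ← Complex.exp_sum,
    Real.coe_toNNReal _ hnonneg]
  congr 1
  simp [Finset.sum_mul, Finset.sum_div]

lemma variance_sum_mul {X : ι → Ω → ℝ} (hX : ∀ i, MemLp (X i) 2 P)
    (hcov : Pairwise fun i j => cov[X i, X j; P] = 0) (θ : ι → ℝ) :
    Var[fun ω => ∑ i, θ i * X i ω; P] = ∑ i, θ i ^ 2 * Var[X i; P] := by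
  rw [variance_fun_sum fun i => (hX i).const_mul (θ i)]
  refine Finset.sum_congr rfl fun i _ => ?_
  rw [Finset.sum_eq_single i _ (by simp)]
  · rw [covariance_const_mul_left, covariance_const_mul_right,
      covariance_self (hX i).1.aemeasurable]
    ring
  · intro j _ hji
    rw [covariance_const_mul_left, covariance_const_mul_right, hcov hji.symm, mul_zero, mul_zero]

theorem tendstoInDistribution_inv_sqrt_mul_sum_sub_pi {X : ℕ → Ω → ι → ℝ}
    (hX : ∀ i, MemLp (fun ω => X 0 ω i) 2 P)
    (hcov : Pairwise fun i j => cov[fun ω => X 0 ω i, fun ω => X 0 ω j; P] = 0)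
    (hindep : iIndepFun X P) (hident : ∀ k, IdentDistrib (X k) (X 0) P P) :
    TendstoInDistribution
      (fun (n : ℕ) ω i => (√n)⁻¹ * (∑ k ∈ Finset.range n, X k ω i - n * ∫ ω, X 0 ω i ∂P)) atTop id
      (fun _ => P) (Measure.pi fun i => gaussianReal 0 Var[fun ω => X 0 ω i; P].toNNReal) := by
  have hcoord k i : AEMeasurable (fun ω => X k ω i) P :=
    aemeasurable_pi_iff.1 (hident k).aemeasurable_fst i
  refine tendstoInDistribution_of_forall_sum_mul (fun n => by fun_prop) aemeasurable_id fun θ => ?_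
  have hθ : Measurable fun x : ι → ℝ => ∑ i, θ i * x i := by fun_prop
  have hlaw := hasLaw_sum_mul_pi_gaussianReal (fun i => Var[fun ω => X 0 ω i; P].toNNReal) θ
  simp only [Real.coe_toNNReal _ (variance_nonneg _ _), ← variance_sum_mul hX hcov θ] at hlaw
  simp only [sum_mul_inv_sqrt_mul_sum_sub fun i => (hX i).integrable one_le_two]
  exact tendstoInDistribution_inv_sqrt_mul_sum_sub (X := fun k ω => ∑ i, θ i * X k ω i) hlaw
    (memLp_finsetSum _ fun i _ => (hX i).const_mul (θ i))
    (hindep.comp _ fun _ => hθ) fun k => (hident k).comp hθ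

end CentralLimit

section EdgeCentralLimit

lemma tendstoInDistribution_edgeKernel {V X : Type*} [LinearOrder V] [Fintype V]
    [MeasurableSpace X] {μ : Measure X} [IsProbabilityMeasure μ] {h : X → X → ℝ}
    (hh : IsDegenerateKernel μ h) :
    TendstoInDistribution
      (fun (d : ℕ) (ω : ℕ → V → X) (e : OrderedEdge V) =>
        (√d)⁻¹ * ∑ k ∈ Finset.range d, edgeKernel h e (ω k)) atTop id
      (fun _ => Measure.infinitePi fun _ => Measure.pi fun _ => μ)
      (Measure.pi fun _ => gaussianReal 0 (∫ p, h p.1 p.2 ^ 2 ∂μ.prod μ).toNNReal) := by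
  let P : Measure (ℕ → V → X) := Measure.infinitePi fun _ => Measure.pi fun _ => μ
  have hpres (k : ℕ) : MeasurePreserving (fun ω : ℕ → V → X => ω k) P (Measure.pi fun _ => μ) :=
    measurePreserving_eval_infinitePi _ k
  have hident (k : ℕ) : IdentDistrib (fun ω : ℕ → V → X => ω k) (fun ω => ω 0) P P :=
    ⟨(hpres k).aemeasurable, (hpres 0).aemeasurable, (hpres k).map_eq.trans (hpres 0).map_eq.symm⟩
  have hvec : Measurable fun (x : V → X) (e : OrderedEdge V) => edgeKernel h e x :=
    measurable_pi_iff.2 hh.measurable_edgeKernel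
  have hmean (e : OrderedEdge V) : ∫ ω, edgeKernel h e (ω 0) ∂P = 0 := by
    rw [← hh.integral_edgeKernel e, ← (hpres 0).map_eq, integral_map (hpres 0).aemeasurable
      (hh.measurable_edgeKernel e).aestronglyMeasurable]
  have hcov : Pairwise fun e e' : OrderedEdge V =>
      cov[fun ω => edgeKernel h e (ω 0), fun ω => edgeKernel h e' (ω 0); P] = 0 := by
    intro e e' hne
    rw [← hh.covariance_edgeKernel hne, ← (hpres 0).map_eq]
    exact (covariance_map_fun (hh.measurable_edgeKernel e).aestronglyMeasurable
      (hh.measurable_edgeKernel e').aestronglyMeasurable (hpres 0).aemeasurable).symm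
  have hvar (e : OrderedEdge V) : Var[fun ω => edgeKernel h e (ω 0); P] =
      ∫ p, h p.1 p.2 ^ 2 ∂μ.prod μ := by
    rw [← hh.variance_edgeKernel e, ← (hpres 0).map_eq]
    exact (variance_map (hh.measurable_edgeKernel e).aemeasurable (hpres 0).aemeasurable).symm
  have hclt := tendstoInDistribution_inv_sqrt_mul_sum_sub_pi (P := P)
    (X := fun k ω e => edgeKernel h e (ω k))
    (fun e => (hh.memLp_edgeKernel e).comp_measurePreserving (hpres 0)) hcov
    (iIndepFun_infinitePi (X := fun _ x e => edgeKernel h e x) fun _ => hvec)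
    (fun k => (hident k).comp hvec)
  simpa only [hmean, hvar, mul_zero, sub_zero] using hclt

end EdgeCentralLimit

section BoxProbability

variable {Ω ι κ : Type*} [Fintype κ] {mΩ : MeasurableSpace Ω} {P : Measure Ω}
  [IsProbabilityMeasure P] {ν : κ → Measure ℝ} [∀ i, IsProbabilityMeasure (ν i)]

lemma tendsto_measureReal_forall_mem {l : Filter ι} {Y : ι → Ω → κ → ℝ}
    (hY : TendstoInDistribution Y l id (fun _ => P) (Measure.pi ν)) {s : κ → Set ℝ}
    (hs : ∀ i, MeasurableSet (s i)) (hfrontier : ∀ i, ν i (frontier (s i)) = 0) :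
    Tendsto (fun n => P.real {ω | ∀ i, Y n ω i ∈ s i}) l (𝓝 (∏ i, (ν i).real (s i))) := by
  have hlim := ProbabilityMeasure.tendsto_measure_of_null_frontier_of_tendsto' hY.tendsto
    (E := Set.univ.pi s) (by simpa using measure_pi_frontier_univ_pi_eq_zero ν hfrontier)
  have hbox (n : ι) : P {ω | ∀ i, Y n ω i ∈ s i} = P.map (Y n) (Set.univ.pi s) := by
    rw [Measure.map_apply_of_aemeasurable (hY.forall_aemeasurable n) (.univ_pi hs)]
    congr 1
    ext ω
    simp
  simp only [ProbabilityMeasure.coe_mk, Measure.map_id, ← hbox] at hlim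
  have hprod : (Measure.pi ν).real (Set.univ.pi s) = ∏ i, (ν i).real (s i) := by
    simp [Measure.real, Measure.pi_pi, ENNReal.toReal_prod]
  rw [← hprod]
  exact (ENNReal.tendsto_toReal (measure_ne_top _ _)).comp hlim

open Classical in
lemma tendsto_measureReal_forall_le_iff [∀ i, NullSingletonClass (ν i)] {Y : ℕ → Ω → κ → ℝ}
    (hY : TendstoInDistribution Y atTop id (fun _ => P) (Measure.pi ν)) {τ : ℕ → ℝ} {t : ℝ}
    (hτ : Tendsto τ atTop (𝓝 t)) (A : κ → Prop) :
    Tendsto (fun n => P.real {ω | ∀ i, Y n ω i ≤ τ n ↔ A i}) atTop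
      (𝓝 (∏ i, if A i then (ν i).real (Set.Iic t) else 1 - (ν i).real (Set.Iic t))) := by
  -- Slutsky: translating by `t - τ n → 0` fixes the moving threshold at `t`.
  have hshift : TendstoInDistribution (fun n ω i => Y n ω i + (t - τ n)) atTop id (fun _ => P)
      (Measure.pi ν) := by
    have hconst : Tendsto (fun n (_ : κ) => t - τ n) atTop (𝓝 0) :=
      tendsto_pi_nhds.2 fun _ => by simpa using hτ.const_sub t
    have hsum := hY.add_of_tendstoInMeasure_const (Y := fun n _ _ => t - τ n)
      (tendstoInMeasure_of_tendsto_ae (fun _ => aestronglyMeasurable_const)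
        (ae_of_all _ fun _ => hconst)) fun _ => aemeasurable_const
    simp only [add_zero] at hsum
    exact hsum
  let s (i : κ) : Set ℝ := if A i then Set.Iic t else (Set.Iic t)ᶜ
  have hs (i : κ) : MeasurableSet (s i) := by
    simp only [s]
    split_ifs
    exacts [measurableSet_Iic, measurableSet_Iic.compl]
  have hfrontier (i : κ) : ν i (frontier (s i)) = 0 := by
    simp only [s]
    split_ifs <;> simp
  have hprob (i : κ) : (ν i).real (s i) =
      if A i then (ν i).real (Set.Iic t) else 1 - (ν i).real (Set.Iic t) := by
    simp only [s]
    split_ifs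
    exacts [rfl, probReal_compl_eq_one_sub measurableSet_Iic]
  have hmem (n : ℕ) (ω : Ω) (i : κ) : Y n ω i + (t - τ n) ∈ s i ↔ (Y n ω i ≤ τ n ↔ A i) := by
    have hle : Y n ω i + (t - τ n) ≤ t ↔ Y n ω i ≤ τ n := by constructor <;> intro <;> linarith
    by_cases hA : A i
    · simpa [s, hA] using hle
    · simpa [s, hA] using not_congr hle
  simpa only [hmem, hprob] using tendsto_measureReal_forall_mem hshift hs hfrontier

end BoxProbability

section ErdosRenyi

variable {V : Type*} [LinearOrder V] [Fintype V]

open Classical in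
/-- The probability of the labelled graph `g` in the Erdős–Rényi ensemble on the vertex set `V`
with edge probability `p`. -/
noncomputable def erdosRenyiProb (p : ℝ) (g : SimpleGraph V) : ℝ :=
  ∏ e : OrderedEdge V, if g.Adj e.1.1 e.1.2 then p else 1 - p

lemma sum_negMulLog_erdosRenyiProb (p : ℝ) :
    ∑ g : SimpleGraph V, (erdosRenyiProb p g).negMulLog =
      Fintype.card (OrderedEdge V) * Real.binEntropy p := by
  let q (_ : OrderedEdge V) (b : Bool) : ℝ := if b then p else 1 - p
  have hq (g : SimpleGraph V) :
      erdosRenyiProb p g = ∏ e, q e (graphEquivEdgeIndicator V g e) := by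
    refine Finset.prod_congr rfl fun e _ => ?_
    by_cases hadj : g.Adj e.1.1 e.1.2 <;> simp [q, graphEquivEdgeIndicator, hadj]
  simp only [hq]
  rw [(graphEquivEdgeIndicator V).sum_comp fun f => (∏ e, q e (f e)).negMulLog,
    sum_negMulLog_prod q (by simp [q])]
  simp [q, Real.binEntropy_eq_negMulLog_add_negMulLog_one_sub, mul_add]

end ErdosRenyi

section LimitingEntropy

lemma binEnt_eq_binEntropy_div_log_two (p : ℝ) : binEnt p = Real.binEntropy p / Real.log 2 := by
  rw [Real.binEntropy_eq_negMulLog_add_negMulLog_one_sub, binEnt, Real.logb, Real.logb,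
    Real.negMulLog, Real.negMulLog]
  ring

lemma binEnt_one_half : binEnt (1 / 2) = 1 := by
  rw [binEnt_eq_binEntropy_div_log_two, one_div, Real.binEntropy_two_inv,
    div_self (Real.log_pos one_lt_two).ne']

lemma binEnt_lt_one {p : ℝ} (hp : p ≠ 1 / 2) : binEnt p < 1 := by
  rw [binEnt_eq_binEntropy_div_log_two, div_lt_one (Real.log_pos one_lt_two),
    Real.binEntropy_lt_log_two]
  simpa using hp

lemma pbar_strictMono : StrictMono pbar :=
  have : (gaussianReal 0 (1 / 180)).IsOpenPosMeasure :=
    (gaussianReal_absolutelyContinuous' 0 (by norm_num)).isOpenPosMeasure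
  strictMono_measureReal_Iic

lemma pbar_zero : pbar 0 = 1 / 2 :=
  have := isNegInvariant_gaussianReal_zero (1 / 180)
  have := nullSingletonClass_gaussianReal (μ := 0) (v := 1 / 180) (by norm_num)
  measureReal_Iic_zero

end LimitingEntropy

section RandomGeometricGraph

lemma torusDist_le_iff {d : ℕ} (hd : 0 < d) {x y : Fin d → ℝ} {r : ℝ} (hr : 0 ≤ r)
    (hx : ∀ k, x k ∈ Set.Icc (0 : ℝ) 1) (hy : ∀ k, y k ∈ Set.Icc (0 : ℝ) 1) :
    torusDist d x y ≤ r ↔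
      (√d)⁻¹ * ∑ k, circleKernel (x k) (y k) ≤ (r ^ 2 - d / 12) / √d := by
  have hsqrt : 0 < √(d : ℝ) := by positivity
  have hsum : ∑ k, circleKernel (x k) (y k) =
      ∑ k, min |x k - y k| (1 - |x k - y k|) ^ 2 - d / 12 := by
    simp only [circleKernel, norm_coe_sub_eq_min (hx _) (hy _), Finset.sum_sub_distrib]
    simp [div_eq_mul_inv]
  rw [torusDist, Real.sqrt_le_left hr, inv_mul_eq_div, div_le_div_iff_of_pos_right hsqrt, hsum,
    sub_le_sub_iff_right]

lemma ae_forall_mem_Icc_infinitePi {ι : Type*} [Fintype ι] :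
    ∀ᵐ ω ∂Measure.infinitePi fun _ : ℕ => Measure.pi fun _ : ι => unif01,
      ∀ k i, ω k i ∈ Set.Icc (0 : ℝ) 1 := by
  refine ae_all_iff.2 fun k => ae_all_iff.2 fun i => ?_
  have heval := (measurePreserving_eval (fun _ : ι => unif01) i).comp
    (measurePreserving_eval_infinitePi (fun _ : ℕ => Measure.pi fun _ : ι => unif01) k)
  exact heval.quasiMeasurePreserving.ae (ae_restrict_mem measurableSet_Icc)

lemma measurableSet_forall_torusDist_le_iff (n d : ℕ) (r : ℝ) (g : SimpleGraph (Fin n)) :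
    MeasurableSet {ω : Fin n → Fin d → ℝ |
      ∀ i j : Fin n, i < j → (torusDist d (ω i) (ω j) ≤ r ↔ g.Adj i j)} := by
  have hdist (i j : Fin n) : Measurable fun ω : Fin n → Fin d → ℝ => torusDist d (ω i) (ω j) := by
    unfold torusDist
    fun_prop
  refine measurableSet_setOfPred.2 (.forall fun i => .forall fun j => measurable_const.imp ?_)
  exact (measurableSet_setOfPred.1 (measurableSet_le (hdist i j) measurable_const)).iff
    measurable_const

lemma rggProb_eq_measureReal {n d : ℕ} (hd : 0 < d) {r : ℝ} (hr : 0 ≤ r)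
    (g : SimpleGraph (Fin n)) :
    rggProb n d r g =
      (Measure.infinitePi fun _ : ℕ => Measure.pi fun _ : Fin n => unif01).real
        {ω | ∀ e : OrderedEdge (Fin n),
          (√d)⁻¹ * ∑ k ∈ Finset.range d, edgeKernel circleKernel e (ω k) ≤
            (r ^ 2 - d / 12) / √d ↔ g.Adj e.1.1 e.1.2} := by
  rw [rggProb, cubeLaw, ← (measurePreserving_infinitePi_swap unif01 d).measure_preimage
    (measurableSet_forall_torusDist_le_iff n d r g).nullMeasurableSet]
  refine measureReal_congr ?_
  filter_upwards [ae_forall_mem_Icc_infinitePi] with ω hω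
  refine propext ?_
  simp only [Set.preimage_ofPred_eq, Subtype.forall, Prod.forall, edgeKernel, Finset.sum_range]
  refine forall₃_congr fun i j _ => iff_congr ?_ Iff.rfl
  exact torusDist_le_iff hd hr (fun k => hω k i) fun k => hω k j

lemma tendsto_rggProb (n : ℕ) {t : ℝ} {r : ℕ → ℝ} (hr : ∀ d, 0 ≤ r d)
    (ht : Tendsto (fun d : ℕ => (r d ^ 2 - d / 12) / √d) atTop (𝓝 t)) (g : SimpleGraph (Fin n)) :
    Tendsto (fun d => rggProb n d (r d) g) atTop (𝓝 (erdosRenyiProb (pbar t) g)) := by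
  have hvar : (∫ p, circleKernel p.1 p.2 ^ 2 ∂unif01.prod unif01).toNNReal = 1 / 180 := by
    rw [integral_prod_circleKernel_sq]
    ext
    simp
  have hclt := tendstoInDistribution_edgeKernel (V := Fin n) isDegenerateKernel_circleKernel
  rw [hvar] at hclt
  have := nullSingletonClass_gaussianReal (μ := 0) (v := 1 / 180) (by norm_num)
  refine (tendsto_measureReal_forall_le_iff hclt ht fun e => g.Adj e.1.1 e.1.2).congr' ?_
  filter_upwards [eventually_gt_atTop 0] with d hd
  exact (rggProb_eq_measureReal hd (hr d) g).symm

lemma rggEntropy_eq_sum_negMulLog_div (n d : ℕ) (r : ℝ) :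
    rggEntropy n d r = (∑ g, (rggProb n d r g).negMulLog) / Real.log 2 := by
  simp only [rggEntropy, Real.logb, Real.negMulLog, Finset.sum_div, ← Finset.sum_neg_distrib]
  refine Finset.sum_congr rfl fun g _ => ?_
  ring

lemma tendsto_rggEntropy (n : ℕ) {t : ℝ} {r : ℕ → ℝ} (hr : ∀ d, 0 ≤ r d)
    (ht : Tendsto (fun d : ℕ => (r d ^ 2 - d / 12) / √d) atTop (𝓝 t)) :
    Tendsto (fun d => rggEntropy n d (r d)) atTop
      (𝓝 ((n * (n - 1) : ℝ) / 2 * binEnt (pbar t))) := by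
  simp only [rggEntropy_eq_sum_negMulLog_div]
  rw [binEnt_eq_binEntropy_div_log_two, ← card_orderedEdge_fin, ← mul_div_assoc,
    ← sum_negMulLog_erdosRenyiProb]
  exact (tendsto_finsetSum _ fun g _ =>
    (Real.continuous_negMulLog.tendsto _).comp (tendsto_rggProb n hr ht g)).div_const _

end RandomGeometricGraph

/-- The entropy of the hard RGG on `n` i.i.d. uniform points in the `d`-torus with radius
`r₀(d)`, `(r₀(d)² − d/12)/√d → t`, tends to `(n(n−1)/2)·h₂(p̄(t))`; this limit, as a
function of `t`, is maximised exactly at `t = 0`, where `p̄(0) = 1/2` and the limit is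
`n(n−1)/2`. -/
theorem stmt_14 (n : ℕ) (hn : 2 ≤ n) (t : ℝ) (r₀ : ℕ → ℝ)
    (hpos : ∀ d, 0 < r₀ d)
    (ht : Tendsto (fun d : ℕ => (r₀ d ^ 2 - d / 12) / Real.sqrt d) atTop (𝓝 t)) :
    Tendsto (fun d : ℕ => rggEntropy n d (r₀ d)) atTop
      (𝓝 ((n * (n - 1) : ℝ) / 2 * binEnt (pbar t))) ∧
    (∀ s : ℝ, s ≠ 0 →
      (n * (n - 1) : ℝ) / 2 * binEnt (pbar s) < (n * (n - 1) : ℝ) / 2 * binEnt (pbar 0)) ∧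
    pbar 0 = 1/2 ∧
    (n * (n - 1) : ℝ) / 2 * binEnt (pbar 0) = (n * (n - 1) : ℝ) / 2 := by
  have hedges : 0 < (n * (n - 1) : ℝ) / 2 := by
    have : (2 : ℝ) ≤ n := by exact_mod_cast hn
    nlinarith
  have hmax : binEnt (pbar 0) = 1 := by rw [pbar_zero, binEnt_one_half]
  refine ⟨tendsto_rggEntropy n (fun d => (hpos d).le) ht, fun s hs => ?_, pbar_zero, ?_⟩
  · have hps : pbar s ≠ 1 / 2 := pbar_zero ▸ pbar_strictMono.injective.ne hs
    rw [hmax]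
    exact mul_lt_mul_of_pos_left (binEnt_lt_one hps) hedges
  · rw [hmax, mul_one]
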